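/- Assume Σ has at least 3 elements, k ≥ 1, and f : (Σ*)ᵏ → Σ* is RCP. Then exactly one of the following three conditions holds: (C₁) there exists a letter b ∈ Σ such that f(x₁, …, x_k) ∈ bΣ* for all x₁, …, x_k ∈ Σ*; (C₂) there exists an index i ∈ {1, …, k} such that f(x₁, …, x_k) ∈ xᵢΣ* for all x₁, …, x_k ∈ Σ*; (C₃) f is constant with value ε. -/

import Mathlib

/-- A congruence on the free monoid `List S`: an equivalence relation compatible
with concatenation. -/
def IsCong {S : Type*} (r : List S → List S → Prop) : Prop :=
  Equivalence r ∧ ∀ x y u v : List S, r x y → r u v → r (x ++ u) (y ++ v)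

/-- A monoid homomorphism from the free monoid `List S` to itself. -/
def IsHom {S : Type*} (φ : List S → List S) : Prop :=
  φ [] = [] ∧ ∀ x y : List S, φ (x ++ y) = φ x ++ φ y

/-- A `k`-ary function is congruence preserving. -/
def IsCPK {S : Type*} (k : ℕ) (f : (Fin k → List S) → List S) : Prop :=
  ∀ r : List S → List S → Prop, IsCong r → ∀ x y : Fin k → List S,
    (∀ i, r (x i) (y i)) → r (f x) (f y)

/-- A `k`-ary function preserves all restricted congruences
(kernels of endomorphisms of the free monoid). -/
def IsRCPK {S : Type*} (k : ℕ) (f : (Fin k → List S) → List S) : Prop :=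
  ∀ φ : List S → List S, IsHom φ → ∀ x y : Fin k → List S,
    (∀ i, φ (x i) = φ (y i)) → φ (f x) = φ (f y)

/-- `f (x₁, …, x_k) = w₀ x_{i₁}^{p₁} w₁ x_{i₂}^{p₂} w₂ ⋯ x_{iₙ}^{pₙ} wₙ`
for fixed words `w₀, …, wₙ`, indices `i₁, …, iₙ` and exponents `p₁, …, pₙ`. -/
def PolyFormK {S : Type*} (k : ℕ) (f : (Fin k → List S) → List S) : Prop :=
  ∃ (n : ℕ) (w : ℕ → List S) (idx : ℕ → Fin k) (p : ℕ → ℕ), ∀ x : Fin k → List S,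
    f x = w 0 ++ List.flatten ((List.range n).map fun j =>
      List.flatten (List.replicate (p (j + 1)) (x (idx (j + 1)))) ++ w (j + 1))

/-!
Everything is read off from the first letter of `f x`.

For a unary `f` and a word `x` avoiding the letter `e`, the endomorphism substituting `x` for `e`
identifies `x` with `e`, so `f [e]` controls the first letter of `f x` up to the possibility that
this letter is `e` itself. Erasing letters, together with a spare third letter, removes this
ambiguity: either the first letter of `f x` never changes (or never exists), or it is always the
first letter of `x`. In the latter case the function `y ↦ a⁻¹ f (a y)` again preserves restricted
congruences and has the same property, so by induction `x` is a prefix of `f x`.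

For several variables, fixing all but one of them gives unary functions, and with three letters at
hand the alternatives found on these lines can only fit together in the ways claimed.
-/

section RestrictedCongruences

variable {S : Type*}

lemma IsHom.apply_cons {φ : List S → List S} (hφ : IsHom φ) (a : S) (x : List S) :
    φ (a :: x) = φ [a] ++ φ x :=
  hφ.2 [a] x

lemma isHom_flatMap (g : S → List S) : IsHom (List.flatMap g) :=
  ⟨rfl, fun _ _ => List.flatMap_append⟩

lemma isHom_filter (p : S → Bool) : IsHom (List.filter p) :=
  ⟨rfl, fun _ _ => List.filter_append ..⟩

section Substitution

variable [DecidableEq S] {a b e : S} {l v : List S}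

/-- The letter map of the endomorphism that substitutes the word `v` for the letter `e` and fixes
all other letters. -/
def substLetter (e : S) (v : List S) : S → List S :=
  Function.update (fun a => [a]) e v

@[simp]
lemma substLetter_self (e : S) (v : List S) : substLetter e v e = v :=
  Function.update_self ..

lemma substLetter_of_ne (v : List S) (h : a ≠ e) : substLetter e v a = [a] :=
  Function.update_of_ne h ..

lemma flatMap_substLetter_of_notMem (v : List S) (h : e ∉ l) :
    l.flatMap (substLetter e v) = l := by
  have hfix : ∀ a ∈ l, substLetter e v a = [a] := fun a ha =>
    substLetter_of_ne v (ne_of_mem_of_not_mem ha h)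
  rw [List.flatMap_congr hfix, List.flatMap_singleton']

lemma notMem_of_flatMap_substLetter_eq_nil (h : l.flatMap (substLetter e v) = []) (hae : a ≠ e) :
    a ∉ l := fun ha => by
  simpa [substLetter_of_ne v hae] using List.flatMap_eq_nil_iff.1 h a ha

lemma head?_flatMap_substLetter_of_ne (v : List S) (hl : l.head? = some b) (hbe : b ≠ e) :
    (l.flatMap (substLetter e v)).head? = some b := by
  obtain ⟨t, rfl⟩ := List.head?_eq_some_iff.1 hl
  simp [substLetter_of_ne v hbe]

lemma head?_flatMap_substLetter_self (hl : l.head? = some e) (hv : v.head? = some a) :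
    (l.flatMap (substLetter e v)).head? = some a := by
  obtain ⟨t, rfl⟩ := List.head?_eq_some_iff.1 hl
  simp [hv]

lemma head?_eq_or_of_head?_flatMap_substLetter
    (h : (l.flatMap (substLetter e v)).head? = some a) :
    l.head? = some a ∨ l.head? = some e := by
  cases l with
  | nil => simp at h
  | cons c t =>
    by_cases hce : c = e
    · exact Or.inr (congrArg some hce)
    · rw [head?_flatMap_substLetter_of_ne v rfl hce] at h
      exact Or.inl h

end Substitution

/-- All values of `f` have the same first letter, or all are empty: the alternatives (C₁) and (C₃)
taken together. -/
def HasConstantHead {α : Type*} (f : α → List S) : Prop :=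
  ∀ x y, (f x).head? = (f y).head?

lemma hasConstantHead_iff {α : Type*} {f : α → List S} :
    HasConstantHead f ↔ (∃ b, ∀ x, (f x).head? = some b) ∨ ∀ x, f x = [] := by
  refine ⟨fun h => ?_, ?_⟩
  · by_cases hnil : ∀ x, f x = []
    · exact Or.inr hnil
    · obtain ⟨x, hx⟩ := not_forall.1 hnil
      exact Or.inl ⟨(f x).head hx, fun y => (h y x).trans (List.head?_eq_some_head hx)⟩
  · rintro (⟨b, hb⟩ | hnil) x y
    · rw [hb, hb]
    · rw [hnil, hnil]

lemma head?_filter_eq_some {l : List S} {p : S → Bool} {a : S} (hl : l.head? = some a)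
    (ha : p a) : (l.filter p).head? = some a := by
  obtain ⟨t, rfl⟩ := List.head?_eq_some_iff.1 hl
  rw [List.filter_cons_of_pos ha, List.head?_cons]

lemma head?_eq_some_of_singleton_prefix {l : List S} {a : S} (h : [a] <+: l) :
    l.head? = some a := by
  obtain ⟨t, rfl⟩ := h
  rfl

lemma not_hasConstantHead_of_prefix [Nontrivial S] {ι : Type*} {f : (ι → List S) → List S} {i : ι}
    (h : ∀ x, x i <+: f x) : ¬ HasConstantHead f := fun hconst => by
  obtain ⟨a, b, hab⟩ := exists_pair_ne S
  have hhead (c : S) : (f fun _ => [c]).head? = some c :=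
    head?_eq_some_of_singleton_prefix (h fun _ => [c])
  exact hab (Option.mem_unique ((hconst _ _).symm.trans (hhead a)) (hhead b))

/-- A unary function on words preserving all restricted congruences: the case `k = 1` of
`IsRCPK`, without the detour through one-element tuples. -/
def IsRCP (f : List S → List S) : Prop :=
  ∀ φ : List S → List S, IsHom φ → ∀ x y : List S, φ x = φ y → φ (f x) = φ (f y)

namespace IsRCP

variable {f : List S → List S} {a b e : S} {x : List S}

lemma filter_apply (hf : IsRCP f) (p : S → Bool) (x : List S) :
    (f x).filter p = (f (x.filter p)).filter p :=
  hf _ (isHom_filter p) _ _ (by simp)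

lemma flatMap_substLetter [DecidableEq S] (hf : IsRCP f) (hx : e ∉ x) :
    (f x).flatMap (substLetter e x) = (f [e]).flatMap (substLetter e x) :=
  hf _ (isHom_flatMap _) _ _ (by simp [flatMap_substLetter_of_notMem x hx])

lemma eq_of_head?_apply_filter (hf : IsRCP f) {p : S → Bool} (hpa : p a) (hpb : p b)
    (ha : (f (x.filter p)).head? = some a) (hb : (f x).head? = some b) : a = b := by
  have hfilter := congrArg List.head? (hf.filter_apply p x)
  rw [head?_filter_eq_some hb hpb, head?_filter_eq_some ha hpa] at hfilter
  exact (Option.some.inj hfilter).symm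

-- The alternative `d` is excluded first on powers of `a`, which avoid two letters other than `a`,
-- and then on words over two letters, by erasing one of them; such words determine the first
-- letter of `f x`.
lemma head?_apply_of_filter (hS : 3 ≤ ENat.card S) (hf : IsRCP f)
    (h : ∀ (p : S → Bool) (d : S), p a → ¬ p d →
      (f (x.filter p)).head? = some a ∨ (f (x.filter p)).head? = some d) :
    (f x).head? = some a := by
  classical
  have hpower : (f (x.filter (· = a))).head? = some a := by
    obtain ⟨d, hda, -⟩ := ENat.exists_ne_ne_of_three_le hS a a
    obtain ⟨e, hea, hed⟩ := ENat.exists_ne_ne_of_three_le hS a d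
    rcases h (· = a) d (by simp) (by simpa using hda) with ha | hd
    · exact ha
    rcases h (· = a) e (by simp) (by simpa using hea) with ha | he
    · exact ha
    exact absurd (Option.mem_unique he hd) hed
  have htwo (c : S) : (f (x.filter fun s => s = a ∨ s = c)).head? = some a := by
    obtain ⟨d, hda, hdc⟩ := ENat.exists_ne_ne_of_three_le hS a c
    rcases h (fun s => s = a ∨ s = c) d (by simp) (by simp [hda, hdc]) with ha | hd
    · exact ha
    have hfilter : (x.filter fun s => s = a ∨ s = c).filter (fun s => s = a ∨ s = d) =
        x.filter (· = a) := by
      rw [List.filter_filter]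
      exact List.filter_congr fun s _ => by grind
    have had : a = d := hf.eq_of_head?_apply_filter (p := fun s => s = a ∨ s = d)
      (by simp) (by simp) (hfilter ▸ hpower) hd
    exact absurd had.symm hda
  cases hx : (f x).head? with
  | none =>
    have hmem := List.mem_of_mem_head? (head?_filter_eq_some hpower (p := (· = a)) (by simp))
    rw [← hf.filter_apply, List.head?_eq_none_iff.1 hx] at hmem
    exact absurd hmem List.not_mem_nil
  | some c =>
    rw [hf.eq_of_head?_apply_filter (p := fun s => s = a ∨ s = c) (by simp) (by simp) (htwo c) hx]

lemma head?_apply_of_singleton (hS : 3 ≤ ENat.card S) (hf : IsRCP f) (heb : e ≠ b)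
    (he : (f [e]).head? = some b) (x : List S) : (f x).head? = some b := by
  classical
  have hletter (d : S) (hdb : d ≠ b) : (f [d]).head? = some b := by
    by_cases hde : d = e
    · rwa [hde]
    have hmerge : ((f [d]).flatMap (substLetter e [d])).head? = some b := by
      rw [hf.flatMap_substLetter (by simpa using Ne.symm hde)]
      exact head?_flatMap_substLetter_of_ne _ he heb.symm
    refine (head?_eq_or_of_head?_flatMap_substLetter hmerge).resolve_right fun h => ?_
    rw [head?_flatMap_substLetter_self h rfl] at hmerge
    exact hdb (Option.some.inj hmerge)
  refine hf.head?_apply_of_filter hS fun p d hpb hpd => ?_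
  have hdb : b ≠ d := fun hbd => hpd (hbd ▸ hpb)
  have hsubst := hf.flatMap_substLetter (e := d) (x := x.filter p) (by simp [hpd])
  apply head?_eq_or_of_head?_flatMap_substLetter
  rw [hsubst]
  exact head?_flatMap_substLetter_of_ne _ (hletter d hdb.symm) hdb

lemma head?_apply_cons (hS : 3 ≤ ENat.card S) (hf : IsRCP f)
    (h : ∀ a, (f [a]).head? = some a) (a : S) (x : List S) : (f (a :: x)).head? = some a := by
  classical
  refine hf.head?_apply_of_filter hS fun p d hpa hpd => ?_
  have hsubst := hf.flatMap_substLetter (e := d) (x := (a :: x).filter p) (by simp [hpd])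
  apply head?_eq_or_of_head?_flatMap_substLetter
  rw [hsubst]
  exact head?_flatMap_substLetter_self (h d) (head?_filter_eq_some rfl hpa)

lemma apply_eq_nil_of_singleton [Nontrivial S] (hf : IsRCP f) (he : f [e] = []) (x : List S) :
    f x = [] := by
  classical
  have hletter (d : S) : f [d] = [] := by
    by_cases hde : d = e
    · rwa [hde]
    have hmerge := hf.flatMap_substLetter (e := e) (x := [d]) (by simpa using Ne.symm hde)
    rw [he, List.flatMap_nil, List.flatMap_eq_nil_iff] at hmerge
    refine List.eq_nil_iff_forall_not_mem.2 fun a ha => ?_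
    by_cases hae : a = e
    · simpa [hae] using hmerge a ha
    · simpa [substLetter_of_ne _ hae] using hmerge a ha
  refine List.eq_nil_iff_forall_not_mem.2 fun a ha => ?_
  obtain ⟨d, hda⟩ := exists_ne a
  have hsubst := hf.flatMap_substLetter (e := d) (x := x.filter (· = a))
    (by simpa using fun _ => hda)
  rw [hletter d, List.flatMap_nil] at hsubst
  have ha_filter : a ∈ (f (x.filter (· = a))).filter (· = a) := by
    rw [← hf.filter_apply]
    exact List.mem_filter.2 ⟨ha, by simp⟩
  exact notMem_of_flatMap_substLetter_eq_nil hsubst hda.symm (List.mem_filter.1 ha_filter).1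

lemma hasConstantHead_or_head?_apply_cons (hS : 3 ≤ ENat.card S) (hf : IsRCP f) :
    HasConstantHead f ∨ ∀ a x, (f (a :: x)).head? = some a := by
  by_cases hall : ∀ a, (f [a]).head? = some a
  · exact Or.inr (hf.head?_apply_cons hS hall)
  obtain ⟨e, he⟩ := not_forall.1 hall
  refine Or.inl (hasConstantHead_iff.2 ?_)
  cases hfe : (f [e]).head? with
  | none =>
    have : Nontrivial S := (ENat.one_lt_card_iff_nontrivial S).1 (lt_of_lt_of_le (by norm_num) hS)
    exact Or.inr (hf.apply_eq_nil_of_singleton (List.head?_eq_none_iff.1 hfe))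
  | some b =>
    have heb : e ≠ b := fun heb => he (heb ▸ hfe)
    exact Or.inl ⟨b, hf.head?_apply_of_singleton hS heb hfe⟩

lemma tail_apply_cons (hf : IsRCP f) (h : ∀ x, (f (a :: x)).head? = some a) :
    IsRCP fun x => (f (a :: x)).tail := by
  intro φ hφ x y hxy
  have hcons := hf φ hφ (a :: x) (a :: y) (by rw [hφ.apply_cons, hφ.apply_cons a y, hxy])
  rw [List.eq_cons_of_mem_head? (h x), List.eq_cons_of_mem_head? (h y), hφ.apply_cons,
    hφ.apply_cons a (f (a :: y)).tail] at hcons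
  exact List.append_cancel_left hcons

-- Substituting `ab` for a third letter `c` turns `f [c]`, which starts with `c`, into a word
-- starting with `ab`.
lemma head?_tail_apply_pair (hS : 3 ≤ ENat.card S) (hf : IsRCP f)
    (h : ∀ a x, (f (a :: x)).head? = some a) (hab : a ≠ b) :
    (f [a, b]).tail.head? = some b := by
  classical
  obtain ⟨c, hca, hcb⟩ := ENat.exists_ne_ne_of_three_le hS a b
  have hsubst := hf.flatMap_substLetter (e := c) (x := [a, b]) (by simp [hca, hcb])
  rw [List.eq_cons_of_mem_head? (h a [b]), List.eq_cons_of_mem_head? (h c []), List.flatMap_cons,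
    List.flatMap_cons, substLetter_self, substLetter_of_ne _ hca.symm] at hsubst
  have hhead : ((f [a, b]).tail.flatMap (substLetter c [a, b])).head? = some b := by
    simpa using congrArg (fun l => l.tail.head?) hsubst
  refine (head?_eq_or_of_head?_flatMap_substLetter hhead).resolve_right fun hc => ?_
  rw [head?_flatMap_substLetter_self hc rfl] at hhead
  exact hab (Option.some.inj hhead)

lemma prefix_apply (hS : 3 ≤ ENat.card S) (hf : IsRCP f)
    (h : ∀ a x, (f (a :: x)).head? = some a) (x : List S) : x <+: f x := by
  induction x generalizing f with
  | nil => exact List.nil_prefix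
  | cons a x ih =>
    have htail := hf.tail_apply_cons (h a)
    have hx : x <+: (f (a :: x)).tail := by
      refine ih htail ((htail.hasConstantHead_or_head?_apply_cons hS).resolve_left fun hconst => ?_)
      obtain ⟨b, hba, -⟩ := ENat.exists_ne_ne_of_three_le hS a a
      obtain ⟨c, hca, hcb⟩ := ENat.exists_ne_ne_of_three_le hS a b
      have hbc := hconst [b] [c]
      rw [hf.head?_tail_apply_pair hS h hba.symm, hf.head?_tail_apply_pair hS h hca.symm] at hbc
      exact hcb (Option.some.inj hbc).symm
    rw [List.eq_cons_of_mem_head? (h a x)]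
    exact List.cons_prefix_cons.2 ⟨rfl, hx⟩

theorem hasConstantHead_or_prefix (hS : 3 ≤ ENat.card S) (hf : IsRCP f) :
    HasConstantHead f ∨ ∀ x, x <+: f x :=
  (hf.hasConstantHead_or_head?_apply_cons hS).imp_right (hf.prefix_apply hS)

end IsRCP

section TwoArguments

variable {ι Y : Type*}

-- The slice at `a = []` tells nothing about the role of the first argument: for `F a y = a ++ y i`
-- it has the prefix `y i`. Hence the nonempty first arguments `s :: t` here and below.
lemma prefix_of_slice_prefix (hS : 3 ≤ ENat.card S) {F : List S → (ι → List S) → List S}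
    (hline : ∀ y, HasConstantHead (F · y) ∨ ∀ a, a <+: F a y)
    (hslice : ∀ a, HasConstantHead (F a) ∨ ∃ i, ∀ y, y i <+: F a y)
    {s : S} {t : List S} {i : ι} (hi : ∀ y, y i <+: F (s :: t) y) (a : List S) (y : ι → List S) :
    y i <+: F a y := by
  classical
  have hhead {c : S} (hcs : c ≠ s) {y : ι → List S} (hy : y i = [c]) (a : List S) :
      (F a y).head? = some c := by
    have hc : (F (s :: t) y).head? = some c := head?_eq_some_of_singleton_prefix (hy ▸ hi y)
    rcases hline y with hconst | hprefix
    · exact (hconst a _).trans hc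
    · obtain ⟨w, hw⟩ := hprefix (s :: t)
      rw [← hw] at hc
      exact absurd (Option.some.inj hc).symm hcs
  obtain ⟨c, hcs, -⟩ := ENat.exists_ne_ne_of_three_le hS s s
  obtain ⟨d, hds, hdc⟩ := ENat.exists_ne_ne_of_three_le hS s c
  rcases hslice a with hconst | ⟨j, hj⟩
  · have hcd := hconst (fun _ => [c]) fun _ => [d]
    rw [hhead hcs rfl, hhead hds rfl] at hcd
    exact absurd (Option.some.inj hcd).symm hdc
  · suffices j = i from this ▸ hj y
    by_contra hji
    have hjd := hj (Function.update (fun _ => [d]) i [c])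
    rw [Function.update_of_ne hji] at hjd
    have hd := head?_eq_some_of_singleton_prefix hjd
    rw [hhead hcs (by simp)] at hd
    exact hdc (Option.some.inj hd).symm

lemma hasConstantHead_uncurry_or_prefix [Nontrivial S] {F : List S → Y → List S}
    (hline : ∀ y, HasConstantHead (F · y) ∨ ∀ a, a <+: F a y)
    (hslice : ∀ s t, HasConstantHead (F (s :: t))) :
    HasConstantHead F.uncurry ∨ ∀ a y, a <+: F a y := by
  refine or_iff_not_imp_right.2 fun hnot => ?_
  obtain ⟨y₀, hy₀⟩ : ∃ y, ¬ ∀ a, a <+: F a y := by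
    contrapose! hnot
    exact fun a y => hnot y a
  have hconst₀ := (hline y₀).resolve_right hy₀
  have hconst (y : Y) : HasConstantHead (F · y) := by
    refine (hline y).resolve_right fun hprefix => ?_
    obtain ⟨c, d, hcd⟩ := exists_pair_ne S
    have hheads : (F [c] y).head? = (F [d] y).head? :=
      (hslice c [] y y₀).trans ((hconst₀ _ _).trans (hslice d [] y₀ y))
    rw [head?_eq_some_of_singleton_prefix (hprefix [c]),
      head?_eq_some_of_singleton_prefix (hprefix [d])] at hheads
    exact hcd (Option.some.inj hheads)
  obtain ⟨s⟩ := Nontrivial.to_nonempty (α := S)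
  exact fun (a, y) (b, z) =>
    (hconst y a [s]).trans ((hslice s [] y z).trans (hconst z [s] b))

end TwoArguments

namespace IsRCPK

variable {k : ℕ}

lemma isRCP_cons_left {f : (Fin (k + 1) → List S) → List S} (hf : IsRCPK (k + 1) f)
    (y : Fin k → List S) : IsRCP fun a => f (Fin.cons a y) :=
  fun φ hφ _ _ h => hf φ hφ _ _ (Fin.cases h fun _ => rfl)

lemma cons_right {f : (Fin (k + 1) → List S) → List S} (hf : IsRCPK (k + 1) f) (a : List S) :
    IsRCPK k fun y => f (Fin.cons a y) :=
  fun φ hφ _ _ h => hf φ hφ _ _ (Fin.cases rfl h)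

theorem hasConstantHead_or_prefix (hS : 3 ≤ ENat.card S) {f : (Fin k → List S) → List S}
    (hf : IsRCPK k f) : HasConstantHead f ∨ ∃ i, ∀ x, x i <+: f x := by
  have : Nontrivial S := (ENat.one_lt_card_iff_nontrivial S).1 (lt_of_lt_of_le (by norm_num) hS)
  induction k with
  | zero => exact Or.inl fun x y => by rw [Subsingleton.elim x y]
  | succ k ih =>
    have hline (y : Fin k → List S) := (hf.isRCP_cons_left y).hasConstantHead_or_prefix hS
    have hslice (a : List S) := ih (hf.cons_right a)
    by_cases hprefix : ∃ s t i, ∀ y : Fin k → List S, y i <+: f (Fin.cons (s :: t) y)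
    · obtain ⟨s, t, i, hi⟩ := hprefix
      have hall := prefix_of_slice_prefix hS hline hslice hi
      exact Or.inr ⟨i.succ, Fin.consCases hall⟩
    · have hslice_const (s : S) (t : List S) : HasConstantHead fun y => f (Fin.cons (s :: t) y) :=
        (hslice (s :: t)).resolve_right fun ⟨i, hi⟩ => hprefix ⟨s, t, i, hi⟩
      refine (hasConstantHead_uncurry_or_prefix hline hslice_const).imp (fun hconst x y => ?_)
        fun hall => ⟨0, Fin.consCases hall⟩
      simpa using hconst (x 0, Fin.tail x) (y 0, Fin.tail y)

end IsRCPK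

end RestrictedCongruences

/-- If `S` has at least 3 elements, `k ≥ 1` and `f : (S*)ᵏ → S*` is RCP, then exactly one
of the following holds: (C₁) there is a letter `b` such that every value of `f` starts
with `b`; (C₂) there is an index `i` such that `xᵢ` is a prefix of `f(x₁,…,x_k)` always;
(C₃) `f` is constantly `ε`. -/
theorem stmt_15 {S : Type*} (c₁ c₂ c₃ : S) (h12 : c₁ ≠ c₂) (h13 : c₁ ≠ c₃) (h23 : c₂ ≠ c₃)
    (k : ℕ) (hk : 1 ≤ k) (f : (Fin k → List S) → List S) (hf : IsRCPK k f) :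
    ((∃ b : S, ∀ x : Fin k → List S, ∃ w : List S, f x = b :: w) ∧
      ¬ (∃ i : Fin k, ∀ x : Fin k → List S, ∃ w : List S, f x = x i ++ w) ∧
      ¬ (∀ x : Fin k → List S, f x = [])) ∨
    (¬ (∃ b : S, ∀ x : Fin k → List S, ∃ w : List S, f x = b :: w) ∧
      (∃ i : Fin k, ∀ x : Fin k → List S, ∃ w : List S, f x = x i ++ w) ∧
      ¬ (∀ x : Fin k → List S, f x = [])) ∨
    (¬ (∃ b : S, ∀ x : Fin k → List S, ∃ w : List S, f x = b :: w) ∧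
      ¬ (∃ i : Fin k, ∀ x : Fin k → List S, ∃ w : List S, f x = x i ++ w) ∧
      (∀ x : Fin k → List S, f x = [])) := by
  have hS : 3 ≤ ENat.card S :=
    (Set.encard_eq_three.2 ⟨c₁, c₂, c₃, h12, h13, h23, rfl⟩).ge.trans Set.encard_le_card
  have : Nontrivial S := ⟨c₁, c₂, h12⟩
  simp only [← List.prefix_iff_exists_eq_append, ← List.head?_eq_some_iff]
  have hnot_prefix (hconst : HasConstantHead f) : ¬ ∃ i, ∀ x, x i <+: f x :=
    fun ⟨_, hi⟩ => not_hasConstantHead_of_prefix hi hconst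
  have hnot_nil : (∃ b, ∀ x, (f x).head? = some b) → ¬ ∀ x, f x = [] :=
    fun ⟨b, hb⟩ hnil => by simpa [hnil] using hb fun _ => []
  rcases hf.hasConstantHead_or_prefix hS with hconst | hprefix
  · rcases hasConstantHead_iff.1 hconst with hletter | hnil
    · exact Or.inl ⟨hletter, hnot_prefix hconst, hnot_nil hletter⟩
    · exact Or.inr (Or.inr ⟨fun h => hnot_nil h hnil, hnot_prefix hconst, hnil⟩)
  · have hnot_const : ¬ HasConstantHead f := fun hconst => hnot_prefix hconst hprefix
    exact Or.inr (Or.inl ⟨fun h => hnot_const (hasConstantHead_iff.2 (Or.inl h)), hprefix,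
      fun h => hnot_const (hasConstantHead_iff.2 (Or.inr h))⟩)
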